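/- Let β₁ > β₂ > 0, set D₁ = ((β₁−β₂)/(1+β₁))·((1+β₁)/(1+β₂))^((1+β₂)/(β₁−β₂)), and let ε₀ be a real number with 0 < ε₀ ≤ 1. Then for all real x, y ≥ 0, one has x^(1+β₂) + y^(1+β₁) ≥ 2^(−(1+β₂))·ε₀·(x+y)^(1+β₂) − D₁·ε₀^((1+β₁)/(β₁−β₂)). -/

import Mathlib

/-!
With `p = 1 + β₂` and `q = 1 + β₁`, weighted AM-GM bounds `ε * y ^ p` by `y ^ q` plus
`(q - p) / q * ε ^ (q / (q - p))`. On the other hand `x ^ p + ε * y ^ p` dominates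
`ε * max x y ^ p`, hence `ε * ((x + y) / 2) ^ p`. The constant `D₁` is the coefficient
`(q - p) / q` enlarged by a factor `(q / p) ^ (p / (q - p)) ≥ 1`.
-/

section PowerSums

variable {p q ε x y : ℝ}

theorem mul_rpow_le_weighted_add_rpow (hp : 0 ≤ p) (hpq : p < q) (hε : 0 ≤ ε) (hy : 0 ≤ y) :
    ε * y ^ p ≤ p / q * y ^ q + (q - p) / q * ε ^ (q / (q - p)) := by
  have hq : 0 < q := hp.trans_lt hpq
  have hqp : 0 < q - p := sub_pos.mpr hpq
  have hweights : p / q + (q - p) / q = 1 := by field_simp; ring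
  have hy_pow : (y ^ q) ^ (p / q) = y ^ p := by
    rw [← Real.rpow_mul hy, mul_div_cancel₀ p hq.ne']
  have hε_pow : (ε ^ (q / (q - p))) ^ ((q - p) / q) = ε := by
    rw [← Real.rpow_mul hε, div_mul_div_cancel₀ hqp.ne', div_self hq.ne', Real.rpow_one]
  calc ε * y ^ p = (y ^ q) ^ (p / q) * (ε ^ (q / (q - p))) ^ ((q - p) / q) := by
        rw [hy_pow, hε_pow, mul_comm]
    _ ≤ p / q * y ^ q + (q - p) / q * ε ^ (q / (q - p)) :=
        Real.geom_mean_le_arith_mean2_weighted (by positivity) (by positivity)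
          (by positivity) (by positivity) hweights

theorem mul_rpow_sub_le_rpow (hp : 0 ≤ p) (hpq : p < q) (hε : 0 ≤ ε) (hy : 0 ≤ y) :
    ε * y ^ p - (q - p) / q * ε ^ (q / (q - p)) ≤ y ^ q := by
  have hq : 0 < q := hp.trans_lt hpq
  have hweight : p / q * y ^ q ≤ y ^ q :=
    mul_le_of_le_one_left (Real.rpow_nonneg hy q) ((div_le_one hq).mpr hpq.le)
  linarith [mul_rpow_le_weighted_add_rpow hp hpq hε hy]

theorem half_add_rpow_le_rpow_max (hp : 0 ≤ p) (hx : 0 ≤ x) (hy : 0 ≤ y) :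
    ((x + y) / 2) ^ p ≤ max x y ^ p := by
  have hmean : (x + y) / 2 ≤ max x y := by linarith [le_max_left x y, le_max_right x y]
  exact Real.rpow_le_rpow (by positivity) hmean hp

theorem mul_rpow_max_le_rpow_add_mul_rpow (hε : 0 ≤ ε) (hε_one : ε ≤ 1) (hx : 0 ≤ x)
    (hy : 0 ≤ y) : ε * max x y ^ p ≤ x ^ p + ε * y ^ p := by
  have hxp : 0 ≤ x ^ p := Real.rpow_nonneg hx p
  have hyp : 0 ≤ ε * y ^ p := mul_nonneg hε (Real.rpow_nonneg hy p)
  rcases max_choice x y with hmax | hmax <;> rw [hmax]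
  · exact (mul_le_of_le_one_left hxp hε_one).trans (le_add_of_nonneg_right hyp)
  · exact le_add_of_nonneg_left hxp

theorem two_rpow_neg_mul_add_rpow_le (hp : 0 ≤ p) (hε : 0 ≤ ε) (hε_one : ε ≤ 1) (hx : 0 ≤ x)
    (hy : 0 ≤ y) : (2 : ℝ) ^ (-p) * ε * (x + y) ^ p ≤ x ^ p + ε * y ^ p :=
  calc (2 : ℝ) ^ (-p) * ε * (x + y) ^ p = ε * ((x + y) / 2) ^ p := by
        rw [Real.div_rpow (add_nonneg hx hy) zero_le_two, Real.rpow_neg zero_le_two]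
        ring
    _ ≤ ε * max x y ^ p := mul_le_mul_of_nonneg_left (half_add_rpow_le_rpow_max hp hx hy) hε
    _ ≤ x ^ p + ε * y ^ p := mul_rpow_max_le_rpow_add_mul_rpow hε hε_one hx hy

theorem sub_div_le_sub_div_mul_rpow (hp : 0 < p) (hpq : p ≤ q) :
    (q - p) / q ≤ (q - p) / q * (q / p) ^ (p / (q - p)) := by
  have hqp : 0 ≤ q - p := sub_nonneg.mpr hpq
  have hpow : 1 ≤ (q / p) ^ (p / (q - p)) :=
    Real.one_le_rpow ((one_le_div hp).mpr hpq) (div_nonneg hp.le hqp)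
  exact le_mul_of_one_le_right (div_nonneg hqp (hp.le.trans hpq)) hpow

end PowerSums

theorem stmt16_general {β₁ β₂ ε₀ D₁ x y : ℝ} (hβ₂ : -1 ≤ β₂) (hβ : β₂ < β₁)
    (hD₁ : (β₁ - β₂) / (1 + β₁) ≤ D₁) (hε₀ : 0 ≤ ε₀) (hε₀1 : ε₀ ≤ 1) (hx : 0 ≤ x) (hy : 0 ≤ y) :
    (2 : ℝ) ^ (-(1 + β₂)) * ε₀ * (x + y) ^ (1 + β₂) - D₁ * ε₀ ^ ((1 + β₁) / (β₁ - β₂))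
      ≤ x ^ (1 + β₂) + y ^ (1 + β₁) := by
  have hp : 0 ≤ 1 + β₂ := by linarith
  have hsum := two_rpow_neg_mul_add_rpow_le hp hε₀ hε₀1 hx hy
  have hyoung := mul_rpow_sub_le_rpow hp (add_lt_add_right hβ 1) hε₀ hy
  rw [add_sub_add_left_eq_sub] at hyoung
  have hconst := mul_le_mul_of_nonneg_right hD₁
    (Real.rpow_nonneg hε₀ ((1 + β₁) / (β₁ - β₂)))
  linarith

/-- Core pointwise estimate in Case 2 of the proof of Theorem 4.1: for
`β₁ > β₂ > 0`, `0 < ε₀ ≤ 1` and `x, y ≥ 0`,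
`x^(1+β₂) + y^(1+β₁) ≥ 2^(−(1+β₂))·ε₀·(x+y)^(1+β₂) − D₁·ε₀^((1+β₁)/(β₁−β₂))`. -/
theorem stmt16 (β₁ β₂ ε₀ : ℝ) (hβ₂ : 0 < β₂) (hβ : β₂ < β₁)
    (D₁ : ℝ)
    (hD₁ : D₁ = ((β₁ - β₂) / (1 + β₁)) *
      ((1 + β₁) / (1 + β₂)) ^ ((1 + β₂) / (β₁ - β₂)))
    (hε₀ : 0 < ε₀) (hε₀1 : ε₀ ≤ 1) :
    ∀ x y : ℝ, 0 ≤ x → 0 ≤ y →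
      (2:ℝ) ^ (-(1 + β₂)) * ε₀ * (x + y) ^ (1 + β₂)
          - D₁ * ε₀ ^ ((1 + β₁) / (β₁ - β₂))
        ≤ x ^ (1 + β₂) + y ^ (1 + β₁) := by
  have hconst : (β₁ - β₂) / (1 + β₁) ≤ D₁ := by
    simpa [hD₁] using sub_div_le_sub_div_mul_rpow (p := 1 + β₂) (q := 1 + β₁)
      (by linarith) (by linarith)
  exact fun x y hx hy ↦ stmt16_general (by linarith) hβ hconst hε₀.le hε₀1 hx hy
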